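/- Let k be a nonzero real number with cos(2π/k) ≠ 0, and set q = exp(2πi/k) ∈ ℂ, [2]_q = q + q^{−1} = 2cos(2π/k), and β = 1 + 2cos(4π/k) ∈ ℝ (so β = q² + 1 + q^{−2} = [3]_q). Let S = ((β : ℂ))^{1/2} / [2]_q, using the principal complex square root, and let R₂ be the 2×2 complex matrix with rows (−1/(q²[2]_q), −S) and (−S, q²/[2]_q). Then R₂ is unitary (i.e. R₂ · R₂† = 1) if and only if cos(4π/k) ≥ −1/2. -/

import Mathlib

open Complex Real

/-!
Since `|q| = 1` and `[2]_q` is real, `R₂` has the shape `[[-ā, -s], [-s, a]]` with `a = q²/[2]_q`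
and `s = β^{1/2}/[2]_q`. Such a matrix is unitary iff `|a|² + |s|² = 1` and `a s̄ = a s`. The first
condition reads `1 + |β| = [2]_q²`, and `[2]_q² = 1 + [3]_q = 1 + β`, so it says `|β| = β`; then
`β^{1/2}` is real and the second condition is automatic.
-/

theorem fin_two_mul_conjTranspose_eq_one_iff {R : Type*} [CommRing R] [StarRing R] (a s : R) :
    !![-star a, -s; -s, a] * (!![-star a, -s; -s, a]).conjTranspose = 1 ↔
      a * star a + s * star s = 1 ∧ a * star s = a * s := by
  have product : !![-star a, -s; -s, a] * (!![-star a, -s; -s, a]).conjTranspose =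
      !![a * star a + s * star s, star (a * s - a * star s);
        a * s - a * star s, a * star a + s * star s] := by
    ext i j
    fin_cases i <;> fin_cases j <;>
      simp only [Matrix.mul_apply, Fin.sum_univ_two, Matrix.conjTranspose_apply, Matrix.of_apply,
        Matrix.cons_val', Matrix.cons_val_zero, Matrix.cons_val_one, Matrix.cons_val_fin_one,
        Fin.zero_eta, Fin.mk_one, Fin.isValue, star_neg, star_star, star_sub, star_mul'] <;>
      ring
  rw [product, Matrix.one_fin_two]
  constructor
  · intro h
    have diagonal := congrFun (congrFun h 0) 0
    have off_diagonal := congrFun (congrFun h 1) 0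
    exact ⟨diagonal, (sub_eq_zero.mp off_diagonal).symm⟩
  · rintro ⟨diagonal, off_diagonal⟩
    rw [diagonal, off_diagonal, sub_self, star_zero]

/-- The two-dimensional block of the three-strand `R`-matrix, `R₂^{[2,1]}`, as a function of the
parameter `q`, the quantum integer `d = [2]_q` and a square root `r` of `[3]_q`. -/
def rMatrix {K : Type*} [Field K] (q d r : K) : Matrix (Fin 2) (Fin 2) K :=
  !![-1 / (q ^ 2 * d), -(r / d); -(r / d), q ^ 2 / d]

section StarField

variable {K : Type*} [Field K] [StarRing K] {q d : K}

theorem rMatrix_eq_of_mul_star_eq_one (hq : q * star q = 1) (hd : IsSelfAdjoint d) (r : K) :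
    rMatrix q d r = !![-star (q ^ 2 / d), -(r / d); -(r / d), q ^ 2 / d] := by
  have star_q : star q = q⁻¹ := eq_inv_of_mul_eq_one_right hq
  rw [rMatrix, star_div₀, star_pow, star_q, hd.star_eq, inv_pow, neg_div, one_div, mul_inv,
    div_eq_mul_inv (q ^ 2)⁻¹]

theorem rMatrix_mul_conjTranspose_eq_one_iff (hq : q * star q = 1) (hd : IsSelfAdjoint d)
    (hd₀ : d ≠ 0) (r : K) :
    rMatrix q d r * (rMatrix q d r).conjTranspose = 1 ↔
      1 + r * star r = d ^ 2 ∧ IsSelfAdjoint r := by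
  have hq₀ : q ≠ 0 := left_ne_zero_of_mul_eq_one hq
  have row_norm : q ^ 2 / d * star (q ^ 2 / d) + r / d * star (r / d) =
      (1 + r * star r) / d ^ 2 := by
    rw [star_div₀, star_div₀, hd.star_eq, star_pow, div_mul_div_comm, div_mul_div_comm,
      ← mul_pow, hq, one_pow, ← add_div, ← sq]
  rw [rMatrix_eq_of_mul_star_eq_one hq hd, fin_two_mul_conjTranspose_eq_one_iff, row_norm,
    div_eq_one_iff_eq (pow_ne_zero 2 hd₀), mul_right_inj' (div_ne_zero (pow_ne_zero 2 hq₀) hd₀),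
    star_div₀, hd.star_eq, div_left_inj' hd₀, isSelfAdjoint_iff]

end StarField

theorem cpow_half_mul_star (z : ℂ) :
    z ^ (1 / 2 : ℂ) * star (z ^ (1 / 2 : ℂ)) = ‖z‖ := by
  have sq_root : (z ^ (1 / 2 : ℂ)) ^ 2 = z := by
    simpa only [one_div, Nat.cast_ofNat] using Complex.cpow_nat_inv_pow z two_ne_zero
  rw [← starRingEnd_apply, Complex.mul_conj', ← Complex.ofReal_pow, ← norm_pow, sq_root]

theorem isSelfAdjoint_ofReal_cpow_half {x : ℝ} (hx : 0 ≤ x) :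
    IsSelfAdjoint ((x : ℂ) ^ (1 / 2 : ℂ)) := by
  have root_real : (x : ℂ) ^ (1 / 2 : ℂ) = ((x ^ (1 / 2 : ℝ) : ℝ) : ℂ) := by
    rw [Complex.ofReal_cpow hx, Complex.ofReal_div, Complex.ofReal_one, Complex.ofReal_ofNat]
  rw [root_real]
  exact Complex.conj_ofReal _

theorem rMatrix_cpow_half_mul_conjTranspose_eq_one_iff {q : ℂ} (hq : ‖q‖ = 1) {d β : ℝ}
    (hd : d ≠ 0) (hdβ : d ^ 2 = 1 + β) :
    rMatrix q d ((β : ℂ) ^ (1 / 2 : ℂ)) *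
      (rMatrix q d ((β : ℂ) ^ (1 / 2 : ℂ))).conjTranspose = 1 ↔ 0 ≤ β := by
  have q_mul_star : q * star q = 1 := by
    rw [← starRingEnd_apply, Complex.mul_conj', hq, Complex.ofReal_one, one_pow]
  have row_norm_iff : 1 + ((|β| : ℝ) : ℂ) = (d : ℂ) ^ 2 ↔ 0 ≤ β := by
    rw [← abs_eq_self, ← Complex.ofReal_pow, hdβ, Complex.ofReal_add, Complex.ofReal_one,
      add_right_inj, Complex.ofReal_inj]
  rw [rMatrix_mul_conjTranspose_eq_one_iff q_mul_star (Complex.conj_ofReal d)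
      (Complex.ofReal_ne_zero.mpr hd), cpow_half_mul_star, Complex.norm_real, Real.norm_eq_abs,
    row_norm_iff, and_iff_left_of_imp isSelfAdjoint_ofReal_cpow_half]

theorem exp_mul_I_add_inv (z : ℂ) :
    Complex.exp (z * I) + (Complex.exp (z * I))⁻¹ = 2 * Complex.cos z := by
  rw [Complex.two_cos, ← Complex.exp_neg, neg_mul]

theorem two_mul_cos_sq (θ : ℝ) : (2 * Real.cos θ) ^ 2 = 1 + (1 + 2 * Real.cos (2 * θ)) := by
  rw [Real.cos_two_mul]
  ring

/-- Unitarity of the three-strand fundamental `R`-matrix `R₂^{[2,1]}` at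
`q = exp(2πi/k)`: with `[2]_q = q + q^{−1}`, `β = 1 + 2cos(4π/k)` (so `β = [3]_q`) and
`S = β^{1/2}/[2]_q` (principal square root), the matrix
`R₂ = [[−1/(q²[2]_q), −S], [−S, q²/[2]_q]]` is unitary iff `cos(4π/k) ≥ −1/2`. -/
theorem stmt17 (k : ℝ) (hk : k ≠ 0) (hcos : Real.cos (2 * π / k) ≠ 0) :
    let q : ℂ := Complex.exp (2 * π * Complex.I / k)
    let tw : ℂ := q + q⁻¹
    let β : ℝ := 1 + 2 * Real.cos (4 * π / k)
    let S : ℂ := (β : ℂ) ^ (1 / 2 : ℂ) / tw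
    let R₂ : Matrix (Fin 2) (Fin 2) ℂ := !![-1 / (q ^ 2 * tw), -S; -S, q ^ 2 / tw]
    (R₂ * R₂.conjTranspose = 1) ↔ -1 / 2 ≤ Real.cos (4 * π / k) := by
  intro q tw β S R₂
  have hq : q = Complex.exp ((2 * π / k : ℝ) * I) := by
    simp only [q]
    push_cast
    ring_nf
  have norm_q : ‖q‖ = 1 := by rw [hq, Complex.norm_exp_ofReal_mul_I]
  have htw : tw = (2 * Real.cos (2 * π / k) : ℝ) := by
    simp only [tw, hq, exp_mul_I_add_inv, Complex.ofReal_mul, Complex.ofReal_ofNat,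
      Complex.ofReal_cos]
  have quantum_two_sq : (2 * Real.cos (2 * π / k)) ^ 2 = 1 + β := by
    rw [two_mul_cos_sq, show 2 * (2 * π / k) = 4 * π / k by ring]
  have hR₂ : R₂ = rMatrix q (2 * Real.cos (2 * π / k) : ℝ) ((β : ℂ) ^ (1 / 2 : ℂ)) := by
    rw [← htw, rMatrix]
  rw [hR₂, rMatrix_cpow_half_mul_conjTranspose_eq_one_iff norm_q
    (mul_ne_zero two_ne_zero hcos) quantum_two_sq]
  constructor <;> intro h <;> linarith
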